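/- Let ψ : [0,1] → ℝ^k be totally non-planar and C^{m+1}. Let Ω_A ⊆ A_k^k be compact and let I = I₁×…×I_k be a product of closed subintervals of [0,1] such that for every a ∈ Ω_A, Ψ_a is injective on I and F_ψ(a,x) ≠ 0 for all x ∈ I. For a ∈ Ω_A let ν_{a,I} := (Ψ_a)_*(λ_{[0,1]^k}|_I). Then for every ε > 0 there exists a constant C such that for every a ∈ Ω_A there exist positive measures τ₁ and τ₂ on ℝ^k with: (1) ν_{a,I} = τ₁ + τ₂; (2) τ₁ = g·λ_{ℝ^k} for some C^m function g : ℝ^k → ℝ; (3) ‖g‖_{C^m} < C; (4) τ₂(ℝ^k) < ε. -/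

import Mathlib

open MeasureTheory

/-- The derivative of a curve `ψ : [0,1] → ℝ^k` (derivative within `[0,1]`). -/
noncomputable def curveDeriv (k : ℕ) (ψ : ℝ → (Fin k → ℝ)) (s : ℝ) : Fin k → ℝ :=
  derivWithin ψ (Set.Icc 0 1) s

/-- A function `ψ : [0,1] → ℝ^k` is totally non-planar if it is `C¹` and for every
nonzero `v ∈ ℝ^k` the set `{s ∈ [0,1] : ψ'(s)·v = 0}` has Lebesgue measure zero. -/
def TotallyNonPlanar (k : ℕ) (ψ : ℝ → (Fin k → ℝ)) : Prop :=
  ContDiffOn ℝ 1 ψ (Set.Icc 0 1) ∧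
    ∀ v : Fin k → ℝ, v ≠ 0 →
      volume {s : ℝ | s ∈ Set.Icc (0:ℝ) 1 ∧ ∑ i, curveDeriv k ψ s i * v i = 0} = 0

/-- `A_k`, the subgroup of diagonal matrices in `SL(k,ℝ)`. -/
def Ak (k : ℕ) : Type := {a : Matrix (Fin k) (Fin k) ℝ // a.IsDiag ∧ a.det = 1}

noncomputable instance (k : ℕ) : TopologicalSpace (Ak k) :=
  inferInstanceAs (TopologicalSpace {a : Matrix (Fin k) (Fin k) ℝ // a.IsDiag ∧ a.det = 1})

/-- `F_ψ(a,x) = det [a₁ ψ'(x₁), …, a_k ψ'(x_k)]`. -/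
noncomputable def Fpsi (k : ℕ) (ψ : ℝ → (Fin k → ℝ)) (a : Fin k → Ak k) (x : Fin k → ℝ) : ℝ :=
  (Matrix.of fun p i => ((a i).val.mulVec (curveDeriv k ψ (x i))) p).det

/-- `Ψ_a(x₁,…,x_k) = Σᵢ aᵢ ψ(xᵢ)`. -/
noncomputable def PsiMap (k : ℕ) (ψ : ℝ → (Fin k → ℝ)) (a : Fin k → Ak k) (x : Fin k → ℝ) :
    Fin k → ℝ :=
  ∑ i, (a i).val.mulVec (ψ (x i))

/-!
Let `U` be the interior of the box `I`; the boundary of `I` is a null set. Choose a `C^m` cutoff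
`0 ≤ χ ≤ 1`, compactly supported in `U`, with `∫_U (1 - χ) < ε`, and take for `τ₁` and `τ₂` the
images under `Ψ_a` of `χ λ` and of `(1 - χ) λ`. The mass of `τ₂` is `∫_U (1 - χ)` for every `a`. By
the change of variables formula, `τ₁` has a density which equals `χ / |det DΨ_a|` transported by
`Ψ_a⁻¹` on `Ψ_a(U)` and vanishes off `Ψ_a(supp χ)`.

The implicit function theorem, applied to `Ψ_a(x) = y` with `(a, y)` as parameters, gives a local
inverse of `Ψ_a` which is `C^(m+1)` jointly in `a` and `y`. Hence the derivatives of the density up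
to order `m` are bounded near `Ψ_a(x)` by a constant that works for all `(a, x)` in a neighbourhood
of a given point, and compactness of `Ω_A × supp χ` makes this constant uniform.
-/

open scoped Topology ENNReal

section DerivativeBounds

variable {E F G P : Type*} [NormedAddCommGroup E] [NormedSpace ℝ E]
  [NormedAddCommGroup F] [NormedSpace ℝ F] [NormedAddCommGroup G] [NormedSpace ℝ G]
  [NormedAddCommGroup P] [NormedSpace ℝ P] {m : ℕ}

theorem iteratedFDeriv_comp_continuousAffineMap {f : E → F} {A : G →ᴬ[ℝ] E} {x : G} {i : ℕ}
    (hf : ContDiffAt ℝ i f (A x)) :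
    iteratedFDeriv ℝ i (f ∘ A) x =
      (iteratedFDeriv ℝ i f (A x)).compContinuousLinearMap fun _ => A.contLinear := by
  obtain ⟨u, hfu, hu, hxu⟩ := eventually_nhds_iff.1 (hf.eventually (by simp))
  have hAu : IsOpen (A ⁻¹' u) := hu.preimage A.continuous
  have hfu : ContDiffOn ℝ i f u := fun y hy => (hfu y hy).contDiffWithinAt
  rw [← iteratedFDerivWithin_of_isOpen i hAu hxu, ← iteratedFDerivWithin_of_isOpen i hu hxu]
  exact (((hfu.ftaylorSeriesWithin hu.uniqueDiffOn).comp_continuousAffineMap A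
    ).eq_iteratedFDerivWithin_of_uniqueDiffOn le_rfl hAu.uniqueDiffOn hxu).symm

theorem norm_iteratedFDeriv_comp_prodMk_le {f : P × E → F} {b : P} {y : E} {i : ℕ}
    (hf : ContDiffAt ℝ i f (b, y)) :
    ‖iteratedFDeriv ℝ i (fun y' => f (b, y')) y‖ ≤ ‖iteratedFDeriv ℝ i f (b, y)‖ := by
  let A : E →ᴬ[ℝ] P × E := (ContinuousAffineMap.const ℝ E b).prod (ContinuousAffineMap.id ℝ E)
  have hA : ‖A.contLinear‖ ≤ 1 := ContinuousLinearMap.norm_inr_le_one ℝ P E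
  calc ‖iteratedFDeriv ℝ i (f ∘ A) y‖
      = ‖(iteratedFDeriv ℝ i f (b, y)).compContinuousLinearMap fun _ => A.contLinear‖ :=
        congrArg norm (iteratedFDeriv_comp_continuousAffineMap hf)
    _ ≤ ‖iteratedFDeriv ℝ i f (b, y)‖ * ∏ _j : Fin i, ‖A.contLinear‖ :=
        ContinuousMultilinearMap.norm_compContinuousLinearMap_le _ _
    _ ≤ ‖iteratedFDeriv ℝ i f (b, y)‖ :=
        mul_le_of_le_one_right (norm_nonneg _)
          (Finset.prod_le_one (fun _ _ => norm_nonneg _) fun _ _ => hA)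

/-- `f` is `C^m` at `x` and its derivatives at `x` up to order `m` have norm at most `C`: the
pointwise form of the bound `‖f‖_{C^m} ≤ C`. -/
def ContDiffBoundAt (m : ℕ) (C : ℝ) (f : E → F) (x : E) : Prop :=
  ContDiffAt ℝ m f x ∧ ∀ i ≤ m, ‖iteratedFDeriv ℝ i f x‖ ≤ C

theorem ContDiffBoundAt.mono {C C' : ℝ} {f : E → F} {x : E} (hf : ContDiffBoundAt m C f x)
    (hC : C ≤ C') : ContDiffBoundAt m C' f x :=
  ⟨hf.1, fun i hi => (hf.2 i hi).trans hC⟩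

theorem ContDiffBoundAt.congr_of_eventuallyEq {C : ℝ} {f f' : E → F} {x : E}
    (hf : ContDiffBoundAt m C f x) (h : f' =ᶠ[𝓝 x] f) : ContDiffBoundAt m C f' x :=
  ⟨hf.1.congr_of_eventuallyEq h, fun i hi => by
    rw [(h.iteratedFDeriv ℝ i).eq_of_nhds]
    exact hf.2 i hi⟩

theorem contDiffBoundAt_zero {C : ℝ} (hC : 0 ≤ C) (x : E) :
    ContDiffBoundAt m C (0 : E → F) x :=
  ⟨contDiff_zero_fun.contDiffAt, fun i _ => by simpa using hC⟩

theorem exists_eventually_contDiffBoundAt_slice {f : P × E → F} {w₀ : P × E}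
    (hf : ContDiffAt ℝ m f w₀) :
    ∃ C, ∀ᶠ w in 𝓝 w₀, ContDiffBoundAt m C (fun y => f (w.1, y)) w.2 := by
  let N : ℕ → P × E → ℝ := fun i w => ‖iteratedFDeriv ℝ i f w‖
  have hNcont : ∀ i ∈ Finset.range (m + 1), ContinuousAt (N i) w₀ := fun i hi =>
    (hf.continuousAt_iteratedFDeriv (by exact_mod_cast Finset.mem_range_succ_iff.1 hi)).norm
  have hsum : ContinuousAt (fun w => ∑ i ∈ Finset.range (m + 1), N i w) w₀ :=
    tendsto_finsetSum _ hNcont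
  refine ⟨∑ i ∈ Finset.range (m + 1), N i w₀ + 1, ?_⟩
  filter_upwards [hf.eventually (by simp), hsum.eventually_lt_const (lt_add_one _)]
    with w hfw hlt
  refine ⟨hfw.comp w.2 (contDiffAt_const.prodMk contDiffAt_id), fun i hi => ?_⟩
  calc ‖iteratedFDeriv ℝ i (fun y => f (w.1, y)) w.2‖
      ≤ N i w := norm_iteratedFDeriv_comp_prodMk_le (hfw.of_le (by exact_mod_cast hi))
    _ ≤ ∑ i ∈ Finset.range (m + 1), N i w :=
        Finset.single_le_sum (f := fun i => N i w) (fun _ _ => norm_nonneg _)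
          (Finset.mem_range_succ_iff.2 hi)
    _ ≤ ∑ i ∈ Finset.range (m + 1), N i w₀ + 1 := hlt.le

end DerivativeBounds

section ParametricInverse

variable {E F P : Type*} [NormedAddCommGroup E] [NormedSpace ℝ E] [CompleteSpace E]
  [NormedAddCommGroup F] [NormedSpace ℝ F]
  [NormedAddCommGroup P] [NormedSpace ℝ P] [CompleteSpace P]

theorem exists_contDiffAt_parametric_rightInverse {n : WithTop ℕ∞} (hn : n ≠ 0)
    {Ψ : P × E → E} {b₀ : P} {x₀ : E} (hΨ : ContDiffAt ℝ n Ψ (b₀, x₀))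
    (hinv : (fderiv ℝ (fun x => Ψ (b₀, x)) x₀).IsInvertible) :
    ∃ φ : P × E → E, ContDiffAt ℝ n φ (b₀, Ψ (b₀, x₀)) ∧ φ (b₀, Ψ (b₀, x₀)) = x₀ ∧
      ∀ᶠ w in 𝓝 (b₀, Ψ (b₀, x₀)), Ψ (w.1, φ w) = w.2 := by
  -- Solve `Ψ (b, x) - y = 0` for `x` as a function of the parameters `(b, y)`.
  let Θ : (P × E) × E → E := fun u => Ψ (u.1.1, u.2) - u.1.2
  let u₀ : (P × E) × E := ((b₀, Ψ (b₀, x₀)), x₀)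
  have hΘ : ContDiffAt ℝ n Θ u₀ :=
    (hΨ.comp u₀ (by fun_prop : ContDiffAt ℝ n (fun u : (P × E) × E => (u.1.1, u.2)) u₀)).sub
      (by fun_prop)
  have hpartial : fderiv ℝ Θ u₀ ∘L .inr ℝ (P × E) E = fderiv ℝ (fun x => Ψ (b₀, x)) x₀ := by
    have hcomp := (hΘ.differentiableAt hn).hasFDerivAt.comp x₀ (hasFDerivAt_prodMk_right u₀.1 x₀)
    have hsub : fderiv ℝ (fun x => Ψ (b₀, x) - Ψ (b₀, x₀)) x₀ = fderiv ℝ (fun x => Ψ (b₀, x)) x₀ :=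
      fderiv_sub_const _
    exact hcomp.fderiv.symm.trans hsub
  have hΘinv : (fderiv ℝ Θ u₀ ∘L .inr ℝ (P × E) E).IsInvertible := hpartial ▸ hinv
  refine ⟨hΘ.implicitFunction hn hΘinv, hΘ.contDiffAt_implicitFunction hn hΘinv,
    hΘ.implicitFunction_apply_self hn hΘinv, ?_⟩
  filter_upwards [hΘ.eventually_apply_implicitFunction hn hΘinv] with w hw
  simpa [Θ, u₀, sub_eq_zero] using hw

variable {m : ℕ} {Ψ : P × E → E} {Ω : Set P} {U : Set E} {h : P × E → F} {g : P → E → F}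

theorem exists_eventually_contDiffBoundAt_of_comp_eq (hU : IsOpen U)
    (hg : ∀ b ∈ Ω, ∀ x ∈ U, g b (Ψ (b, x)) = h (b, x)) {b₀ : P} {x₀ : E} (hx₀ : x₀ ∈ U)
    (hΨ : ContDiffAt ℝ (m + 1 : ℕ) Ψ (b₀, x₀)) (hh : ContDiffAt ℝ m h (b₀, x₀))
    (hinv : (fderiv ℝ (fun x => Ψ (b₀, x)) x₀).IsInvertible) :
    ∃ C, ∀ᶠ z in 𝓝 (b₀, x₀), z.1 ∈ Ω → ContDiffBoundAt m C (g z.1) (Ψ z) := by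
  obtain ⟨φ, hφ, hφ₀, hright⟩ :=
    exists_contDiffAt_parametric_rightInverse (by exact_mod_cast m.succ_ne_zero) hΨ hinv
  have hφU : ∀ᶠ w in 𝓝 (b₀, Ψ (b₀, x₀)), φ w ∈ U :=
    hφ.continuousAt.eventually_mem (hU.mem_nhds (by rwa [hφ₀]))
  have hlift : ContDiffAt ℝ m (fun w : P × E => (w.1, φ w)) (b₀, Ψ (b₀, x₀)) :=
    contDiffAt_fst.prodMk (hφ.of_le (by exact_mod_cast m.le_succ))
  obtain ⟨C, hC⟩ := exists_eventually_contDiffBoundAt_slice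
    (ContDiffAt.comp (g := h) _ (by rwa [hφ₀]) hlift)
  have hΦ : ContinuousAt (fun z : P × E => (z.1, Ψ z)) (b₀, x₀) :=
    continuousAt_fst.prodMk hΨ.continuousAt
  refine ⟨C, ?_⟩
  filter_upwards [hΦ.eventually ((hright.and hφU).eventually_nhds.and hC)]
    with z ⟨hz, hCz⟩ hzΩ
  refine hCz.congr_of_eventuallyEq ?_
  have hslice : ContinuousAt (fun y => (z.1, y)) (Ψ z) := by fun_prop
  filter_upwards [hslice.eventually hz] with y ⟨hy, hyU⟩
  calc g z.1 y = g z.1 (Ψ (z.1, φ (z.1, y))) := by rw [hy]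
    _ = h (z.1, φ (z.1, y)) := hg _ hzΩ _ hyU

theorem exists_contDiffBoundAt_of_comp_eq (hΩ : IsCompact Ω) (hU : IsOpen U)
    (hg : ∀ b ∈ Ω, ∀ x ∈ U, g b (Ψ (b, x)) = h (b, x))
    (hΨ : ∀ b ∈ Ω, ∀ x ∈ U, ContDiffAt ℝ (m + 1 : ℕ) Ψ (b, x))
    (hh : ∀ b ∈ Ω, ∀ x ∈ U, ContDiffAt ℝ m h (b, x))
    (hinv : ∀ b ∈ Ω, ∀ x ∈ U, (fderiv ℝ (fun x => Ψ (b, x)) x).IsInvertible)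
    {K : Set E} (hK : IsCompact K) (hKU : K ⊆ U)
    (hg0 : ∀ b ∈ Ω, ∀ y ∉ (fun x => Ψ (b, x)) '' K, g b y = 0) :
    ∃ C, ∀ b ∈ Ω, ∀ y, ContDiffBoundAt m C (g b) y := by
  have honK : ∃ C, ∀ z ∈ Ω ×ˢ K, z.1 ∈ Ω → ContDiffBoundAt m C (g z.1) (Ψ z) := by
    refine (hΩ.prod hK).induction_on
      (p := fun S => ∃ C, ∀ z ∈ S, z.1 ∈ Ω → ContDiffBoundAt m C (g z.1) (Ψ z))
      ⟨0, by simp⟩ (fun S T hST ⟨C, hC⟩ => ⟨C, fun z hz => hC z (hST hz)⟩) ?_ ?_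
    · rintro S T ⟨C, hC⟩ ⟨C', hC'⟩
      refine ⟨max C C', fun z hz hzΩ => hz.elim (fun hzS => ?_) fun hzT => ?_⟩
      · exact (hC z hzS hzΩ).mono (le_max_left _ _)
      · exact (hC' z hzT hzΩ).mono (le_max_right _ _)
    · rintro ⟨b, x⟩ ⟨hb, hx⟩
      have hxU := hKU hx
      obtain ⟨C, hC⟩ := exists_eventually_contDiffBoundAt_of_comp_eq hU hg hxU
        (hΨ b hb x hxU) (hh b hb x hxU) (hinv b hb x hxU)
      exact ⟨_, mem_nhdsWithin_of_mem_nhds hC, C, fun z hz => hz⟩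
  obtain ⟨C, hC⟩ := honK
  refine ⟨max C 0, fun b hb y => ?_⟩
  by_cases hy : y ∈ (fun x => Ψ (b, x)) '' K
  · obtain ⟨x, hx, rfl⟩ := hy
    exact (hC (b, x) ⟨hb, hx⟩ hb).mono (le_max_left _ _)
  · have hcont : ContinuousOn (fun x => Ψ (b, x)) K := fun x hx =>
      ((hΨ b hb x (hKU hx)).continuousAt.comp (by fun_prop : ContinuousAt (fun x => (b, x)) x)
        ).continuousWithinAt
    have hclosed : IsClosed ((fun x => Ψ (b, x)) '' K) := (hK.image_of_continuousOn hcont).isClosed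
    refine (contDiffBoundAt_zero (le_max_right _ _) y).congr_of_eventuallyEq ?_
    filter_upwards [hclosed.isOpen_compl.mem_nhds hy] with y' hy' using hg0 b hb y' hy'

end ParametricInverse

section Determinant

variable {E P : Type*} [NormedAddCommGroup E] [NormedSpace ℝ E] [FiniteDimensional ℝ E]
  [NormedAddCommGroup P] [NormedSpace ℝ P] {n : WithTop ℕ∞}

theorem contDiff_continuousLinearMap_det :
    ContDiff ℝ n (ContinuousLinearMap.det : (E →L[ℝ] E) → ℝ) := by
  let v := Module.finBasis ℝ E
  have hentry : ∀ i j, ContDiff ℝ n fun A : E →L[ℝ] E => v.coord i (A (v j)) := fun i j =>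
    (v.coord i).toContinuousLinearMap.contDiff.comp
      (ContinuousLinearMap.apply ℝ E (v j)).contDiff
  have hdet : (ContinuousLinearMap.det : (E →L[ℝ] E) → ℝ) = fun A =>
      ∑ σ : Equiv.Perm _, (Equiv.Perm.sign σ : ℝ) * ∏ i, v.coord (σ i) (A (v i)) := by
    ext A
    rw [ContinuousLinearMap.det, ← LinearMap.det_toMatrix v, Matrix.det_apply']
    simp only [LinearMap.toMatrix_apply, Module.Basis.coord_apply, ContinuousLinearMap.coe_coe]
  rw [hdet]
  exact ContDiff.sum fun σ _ => contDiff_const.mul (contDiff_prod fun i _ => hentry _ _)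

theorem isInvertible_of_det_ne_zero {A : E →L[ℝ] E} (hA : A.det ≠ 0) : A.IsInvertible :=
  ⟨A.toContinuousLinearEquivOfDetNeZero hA, A.coe_toContinuousLinearEquivOfDetNeZero hA⟩

theorem contDiffAt_div_abs_det_fderiv {m : ℕ} {Ψ : P × E → E} {χ : E → ℝ} {b : P} {x : E}
    (hΨ : ContDiffAt ℝ (m + 1 : ℕ) Ψ (b, x)) (hχ : ContDiff ℝ m χ)
    (hdet : (fderiv ℝ (fun x => Ψ (b, x)) x).det ≠ 0) :
    ContDiffAt ℝ m (fun z : P × E => χ z.2 / |(fderiv ℝ (fun x => Ψ (z.1, x)) z.2).det|)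
      (b, x) := by
  have hfderiv : ContDiffAt ℝ m (fun z : P × E => fderiv ℝ (fun x => Ψ (z.1, x)) z.2) (b, x) :=
    ContDiffAt.fderiv (f := fun (z : P × E) x => Ψ (z.1, x))
      (hΨ.comp ((b, x), x) (by fun_prop : ContDiffAt ℝ (m + 1 : ℕ)
        (fun w : (P × E) × E => (w.1.1, w.2)) ((b, x), x)))
      contDiffAt_snd (by exact_mod_cast le_rfl)
  exact (hχ.contDiffAt.comp (b, x) contDiffAt_snd).div
    (ContDiffAt.abs (n := (m : ℕ∞)) (contDiff_continuousLinearMap_det.contDiffAt.comp _ hfderiv)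
      hdet)
    (abs_ne_zero.2 hdet)

end Determinant

section PushforwardDensity

variable {E : Type*} [NormedAddCommGroup E] [NormedSpace ℝ E]

/-- The density of the image under `f` of the measure with density `ρ` on `U`, for `f` injective
and differentiable on `U`: it takes the value `ρ x / |det f'(x)|` at `f x` for `x ∈ U` and vanishes
off `f '' U`. -/
noncomputable def pushforwardDensity (f : E → E) (U : Set E) (ρ : E → ℝ) : E → ℝ :=
  Function.extend (fun x : U => f x) (fun x : U => ρ x / |(fderiv ℝ f x).det|) 0

variable {f : E → E} {U : Set E} {ρ : E → ℝ}

theorem pushforwardDensity_apply (hf : U.InjOn f) {x : E} (hx : x ∈ U) :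
    pushforwardDensity f U ρ (f x) = ρ x / |(fderiv ℝ f x).det| :=
  hf.injective.extend_apply _ _ ⟨x, hx⟩

theorem pushforwardDensity_of_notMem_image {y : E} (hy : y ∉ f '' U) :
    pushforwardDensity f U ρ y = 0 :=
  Function.extend_apply' _ _ _ fun ⟨x, hx⟩ => hy ⟨x, x.2, hx⟩

theorem pushforwardDensity_eq_zero_of_support_subset (hf : U.InjOn f) {K : Set E}
    (hρ : Function.support ρ ⊆ K) {y : E} (hy : y ∉ f '' K) :
    pushforwardDensity f U ρ y = 0 := by
  by_cases hyU : y ∈ f '' U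
  · obtain ⟨x, hx, rfl⟩ := hyU
    have hρx : ρ x = 0 := Function.notMem_support.1 fun hxρ => hy ⟨x, hρ hxρ, rfl⟩
    rw [pushforwardDensity_apply hf hx, hρx, zero_div]
  · exact pushforwardDensity_of_notMem_image hyU

theorem pushforwardDensity_nonneg (hf : U.InjOn f) (hρ : 0 ≤ ρ) : 0 ≤ pushforwardDensity f U ρ := by
  intro y
  by_cases hy : y ∈ f '' U
  · obtain ⟨x, hx, rfl⟩ := hy
    rw [pushforwardDensity_apply hf hx]
    exact div_nonneg (hρ x) (abs_nonneg _)
  · exact (pushforwardDensity_of_notMem_image hy).ge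

variable [FiniteDimensional ℝ E] [MeasurableSpace E] [BorelSpace E]
  (μ : Measure E) [μ.IsAddHaarMeasure]

theorem map_withDensity_eq_withDensity_pushforwardDensity (hU : IsOpen U)
    (hf : ∀ x ∈ U, DifferentiableAt ℝ f x) (hinj : U.InjOn f)
    (hdet : ∀ x ∈ U, (fderiv ℝ f x).det ≠ 0) :
    ((μ.restrict U).withDensity fun x => ENNReal.ofReal (ρ x)).map f =
      μ.withDensity fun y => ENNReal.ofReal (pushforwardDensity f U ρ y) := by
  have hf' : ∀ x ∈ U, HasFDerivWithinAt f (fderiv ℝ f x) U x := fun x hx =>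
    (hf x hx).hasFDerivAt.hasFDerivWithinAt
  have hfU : AEMeasurable f (μ.restrict U) :=
    ContinuousOn.aemeasurable (fun x hx => (hf x hx).continuousAt.continuousWithinAt)
      hU.measurableSet
  have himage : MeasurableSet (f '' U) :=
    measurable_image_of_fderivWithin hU.measurableSet hf' hinj
  ext t ht
  set g : E → ℝ≥0∞ := fun y => ENNReal.ofReal (pushforwardDensity f U ρ y) with hg
  have hgsupp : (f '' U).indicator (t.indicator g) = t.indicator g :=
    Set.indicator_eq_self.2 <| Function.support_subset_iff'.2 fun y hy => by
      simp [hg, pushforwardDensity_of_notMem_image hy]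
  have hjacobian : ∀ x ∈ U, ENNReal.ofReal |(fderiv ℝ f x).det| * t.indicator g (f x) =
      (f ⁻¹' t).indicator (fun x => ENNReal.ofReal (ρ x)) x := fun x hx => by
    by_cases hxt : f x ∈ t
    · rw [Set.indicator_of_mem hxt, Set.indicator_of_mem (Set.mem_preimage.2 hxt), hg,
        ← ENNReal.ofReal_mul (abs_nonneg _), pushforwardDensity_apply hinj hx,
        mul_div_cancel₀ _ (abs_ne_zero.2 (hdet x hx))]
    · rw [Set.indicator_of_notMem hxt, Set.indicator_of_notMem (by exact hxt), mul_zero]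
  calc ((μ.restrict U).withDensity fun x => ENNReal.ofReal (ρ x)).map f t
      = ∫⁻ x in f ⁻¹' t, ENNReal.ofReal (ρ x) ∂μ.restrict U := by
        rw [Measure.map_apply_of_aemeasurable
          (hfU.mono_ac (withDensity_absolutelyContinuous _ _)) ht, withDensity_apply']
    _ = ∫⁻ x in U, (f ⁻¹' t).indicator (fun x => ENNReal.ofReal (ρ x)) x ∂μ :=
        (lintegral_indicator₀ (hfU.nullMeasurable ht) _).symm
    _ = ∫⁻ x in U, ENNReal.ofReal |(fderiv ℝ f x).det| * t.indicator g (f x) ∂μ :=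
        (setLIntegral_congr_fun hU.measurableSet hjacobian).symm
    _ = ∫⁻ y in f '' U, t.indicator g y ∂μ :=
        (lintegral_image_eq_lintegral_abs_det_fderiv_mul μ hU.measurableSet hf' hinj _).symm
    _ = ∫⁻ y, t.indicator g y ∂μ := by rw [← lintegral_indicator himage, hgsupp]
    _ = μ.withDensity g t := by rw [lintegral_indicator ht, withDensity_apply _ ht]

end PushforwardDensity

section Decomposition

theorem map_eq_map_withDensity_add_map_withDensity_one_sub {α β : Type*} [MeasurableSpace α]
    [MeasurableSpace β] {μ : Measure α} {f : α → β} (hf : AEMeasurable f μ) {w : α → ℝ≥0∞}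
    (hw : Measurable w) (hw1 : w ≤ 1) :
    μ.map f = (μ.withDensity w).map f + (μ.withDensity (1 - w)).map f := by
  have hsum : μ.withDensity w + μ.withDensity (1 - w) = μ := by
    rw [← withDensity_add_left hw, add_tsub_cancel_of_le hw1, withDensity_one]
  rw [← AEMeasurable.map_add₀ (hf.mono_ac (withDensity_absolutelyContinuous _ _))
    (hf.mono_ac (withDensity_absolutelyContinuous _ _)), hsum]

variable {E P : Type*} [NormedAddCommGroup E] [NormedSpace ℝ E] [MeasurableSpace E]
  [NormedAddCommGroup P] [NormedSpace ℝ P] {m : ℕ} {ε : ℝ≥0∞}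

/-- The measure `ν` is the sum of a measure with a nonnegative `C^m` density with respect to `μ`,
whose derivatives up to order `m` are bounded by `C`, and of a measure of mass less than `ε`. -/
def HasSmoothPart (μ : Measure E) (m : ℕ) (C : ℝ) (ε : ℝ≥0∞) (ν : Measure E) : Prop :=
  ∃ τ₁ τ₂ : Measure E, ν = τ₁ + τ₂ ∧
    (∃ g : E → ℝ, ContDiff ℝ m g ∧ (∀ x, 0 ≤ g x) ∧
      τ₁ = μ.withDensity (fun x => ENNReal.ofReal (g x)) ∧
      ∀ i ≤ m, ∀ x, ‖iteratedFDeriv ℝ i g x‖ < C) ∧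
    τ₂ Set.univ < ε

variable [FiniteDimensional ℝ E] [BorelSpace E] (μ : Measure E) {f : E → E} {U : Set E}

theorem exists_contDiff_cutoff (hU : IsOpen U) (hμU : μ U ≠ ∞) (hε : ε ≠ 0) :
    ∃ χ : E → ℝ, ContDiff ℝ m χ ∧ 0 ≤ χ ∧ χ ≤ 1 ∧ HasCompactSupport χ ∧ tsupport χ ⊆ U ∧
      ∫⁻ x in U, (1 - ENNReal.ofReal (χ x)) ∂μ < ε := by
  obtain ⟨K, hKU, hK, hμK⟩ := hU.measurableSet.exists_isCompact_sdiff_lt hμU hε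
  obtain ⟨L, hL, hKL, hLU⟩ := exists_compact_between hK hU hKU
  obtain ⟨χ, hχ, hχ01, hsupp, hχ1⟩ := exists_contMDiff_support_eq_eq_one_iff
    (modelWithCornersSelf ℝ E) (n := m) (isOpen_interior (s := L)) hK.isClosed hKL
  have hχL : tsupport χ ⊆ L :=
    closure_minimal (hsupp.trans_subset interior_subset) hL.isClosed
  have hle : ∀ x, 1 - ENNReal.ofReal (χ x) ≤ Kᶜ.indicator 1 x := fun x => by
    by_cases hx : x ∈ K
    · simp [(hχ1 x).1 hx]
    · simp [hx]
  refine ⟨χ, hχ.contDiff, fun x => (hχ01 ⟨x, rfl⟩).1, fun x => (hχ01 ⟨x, rfl⟩).2,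
    hL.of_isClosed_subset (isClosed_tsupport χ) hχL, hχL.trans hLU, ?_⟩
  calc ∫⁻ x in U, (1 - ENNReal.ofReal (χ x)) ∂μ
      ≤ ∫⁻ x in U, Kᶜ.indicator 1 x ∂μ := lintegral_mono hle
    _ = μ (U \ K) := by
        rw [lintegral_indicator_one hK.measurableSet.compl,
          Measure.restrict_apply hK.measurableSet.compl, Set.inter_comm, Set.sdiff_eq]
    _ < ε := hμK

variable [μ.IsAddHaarMeasure]

theorem hasSmoothPart_map_restrict (hU : IsOpen U) (hf : ∀ x ∈ U, DifferentiableAt ℝ f x)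
    (hinj : U.InjOn f) (hdet : ∀ x ∈ U, (fderiv ℝ f x).det ≠ 0)
    {χ : E → ℝ} (hχ : Measurable χ) (hχ0 : 0 ≤ χ) (hχ1 : χ ≤ 1)
    (hχε : ∫⁻ x in U, (1 - ENNReal.ofReal (χ x)) ∂μ < ε)
    {C C' : ℝ} (hCC' : C < C') (hC : ∀ y, ContDiffBoundAt m C (pushforwardDensity f U χ) y) :
    HasSmoothPart μ m C' ε ((μ.restrict U).map f) := by
  have hfU : AEMeasurable f (μ.restrict U) :=
    ContinuousOn.aemeasurable (fun x hx => (hf x hx).continuousAt.continuousWithinAt)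
      hU.measurableSet
  refine ⟨_, _, map_eq_map_withDensity_add_map_withDensity_one_sub hfU hχ.ennreal_ofReal
    fun x => ENNReal.ofReal_le_one.2 (hχ1 x), ⟨pushforwardDensity f U χ,
      contDiff_iff_contDiffAt.2 fun y => (hC y).1, pushforwardDensity_nonneg hinj hχ0,
      map_withDensity_eq_withDensity_pushforwardDensity μ hU hf hinj hdet,
      fun i hi y => ((hC y).2 i hi).trans_lt hCC'⟩, ?_⟩
  rwa [Measure.map_apply_of_aemeasurable (hfU.mono_ac (withDensity_absolutelyContinuous _ _))
    MeasurableSet.univ, Set.preimage_univ, withDensity_apply _ MeasurableSet.univ,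
    Measure.restrict_univ]

theorem exists_forall_hasSmoothPart_map_restrict [CompleteSpace P] {Ψ : P × E → E} {Ω : Set P}
    (hΩ : IsCompact Ω) (hU : IsOpen U) (hμU : μ U ≠ ∞)
    (hΨ : ∀ b ∈ Ω, ∀ x ∈ U, ContDiffAt ℝ (m + 1 : ℕ) Ψ (b, x))
    (hinj : ∀ b ∈ Ω, U.InjOn fun x => Ψ (b, x))
    (hdet : ∀ b ∈ Ω, ∀ x ∈ U, (fderiv ℝ (fun x => Ψ (b, x)) x).det ≠ 0) (hε : ε ≠ 0) :
    ∃ C, ∀ b ∈ Ω, HasSmoothPart μ m C ε ((μ.restrict U).map fun x => Ψ (b, x)) := by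
  obtain ⟨χ, hχ, hχ0, hχ1, hχc, hχU, hχε⟩ := exists_contDiff_cutoff μ (m := m) hU hμU hε
  have : CompleteSpace E := FiniteDimensional.complete ℝ E
  obtain ⟨C, hC⟩ := exists_contDiffBoundAt_of_comp_eq
    (g := fun b => pushforwardDensity (fun x => Ψ (b, x)) U χ) hΩ hU
    (fun b hb x hx => pushforwardDensity_apply (hinj b hb) hx) hΨ
    (fun b hb x hx => contDiffAt_div_abs_det_fderiv (hΨ b hb x hx) hχ (hdet b hb x hx))
    (fun b hb x hx => isInvertible_of_det_ne_zero (hdet b hb x hx)) hχc hχU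
    (fun b hb y hy => pushforwardDensity_eq_zero_of_support_subset (hinj b hb)
      (subset_tsupport χ) hy)
  have hdiff : ∀ b ∈ Ω, ∀ x ∈ U, DifferentiableAt ℝ (fun x => Ψ (b, x)) x := fun b hb x hx =>
    ((hΨ b hb x hx).differentiableAt (by exact_mod_cast m.succ_ne_zero)).comp x (by fun_prop)
  exact ⟨C + 1, fun b hb => hasSmoothPart_map_restrict μ hU (hdiff b hb) (hinj b hb) (hdet b hb)
    hχ.continuous.measurable hχ0 hχ1 hχε (lt_add_one C) (hC b hb)⟩

end Decomposition

section Box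

variable {ι : Type*} [Fintype ι] (c d : ι → ℝ)

theorem volume_setOf_forall_mem_Icc_ne_top :
    volume {x : ι → ℝ | ∀ i, x i ∈ Set.Icc (c i) (d i)} ≠ ∞ :=
  ((Metric.isBounded_Icc c d).subset fun _ hx =>
    ⟨fun i => (hx i).1, fun i => (hx i).2⟩).measure_lt_top.ne

theorem volume_frontier_setOf_forall_mem_Icc :
    volume (frontier {x : ι → ℝ | ∀ i, x i ∈ Set.Icc (c i) (d i)}) = 0 := by
  have hconvex : Convex ℝ {x : ι → ℝ | ∀ i, x i ∈ Set.Icc (c i) (d i)} := by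
    rw [Set.ofPred_forall]
    exact convex_iInter fun i => (convex_Icc (c i) (d i)).is_linear_preimage
      (LinearMap.proj i : (ι → ℝ) →ₗ[ℝ] ℝ).isLinear
  exact hconvex.addHaar_frontier volume

end Box

section DiagonalOperators

variable {k : ℕ}

/-- The operators on `ℝ^k` given by a tuple `(a₁, …, a_k)` of matrices in `A_k`. -/
noncomputable def diagonalOperators (a : Fin k → Ak k) : Fin k → (Fin k → ℝ) →L[ℝ] (Fin k → ℝ) :=
  fun i => (Matrix.toLin' (a i).val).toContinuousLinearMap

theorem continuous_diagonalOperators : Continuous (diagonalOperators (k := k)) := by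
  let T : Matrix (Fin k) (Fin k) ℝ →ₗ[ℝ] (Fin k → ℝ) →L[ℝ] (Fin k → ℝ) :=
    LinearMap.toContinuousLinearMap.toLinearMap ∘ₗ Matrix.toLin'.toLinearMap
  exact continuous_pi fun i => T.continuous_of_finiteDimensional.comp
    (continuous_subtype_val.comp (continuous_apply i))

end DiagonalOperators

section CurveSum

variable {ι F G : Type*} [Fintype ι] [NormedAddCommGroup F] [NormedSpace ℝ F]
  [NormedAddCommGroup G] [NormedSpace ℝ G]

/-- The map `Ψ_a(x) = Σᵢ aᵢ γᵢ(xᵢ)`, with operators `aᵢ` and a curve `γᵢ` for each coordinate. It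
is a function of the pair `(a, x)`, so that it can be differentiated jointly in both. -/
def curveSum (γ : ι → ℝ → F) (z : (ι → F →L[ℝ] G) × (ι → ℝ)) : G :=
  ∑ i, z.1 i (γ i (z.2 i))

theorem contDiffAt_curveSum {n : WithTop ℕ∞} {γ : ι → ℝ → F} {a : ι → F →L[ℝ] G} {x : ι → ℝ}
    (hγ : ∀ i, ContDiffAt ℝ n (γ i) (x i)) : ContDiffAt ℝ n (curveSum γ) (a, x) := by
  refine ContDiffAt.sum fun i _ => ContDiffAt.clm_apply (by fun_prop) ?_
  exact ContDiffAt.comp (g := γ i) (a, x) (hγ i) (by fun_prop)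

theorem det_fderiv_curveSum [DecidableEq ι] {γ : ι → ℝ → F} {a : ι → F →L[ℝ] (ι → ℝ)}
    {x : ι → ℝ} (hγ : ∀ i, DifferentiableAt ℝ (γ i) (x i)) :
    (fderiv ℝ (fun x => curveSum γ (a, x)) x).det =
      (Matrix.of fun p i => a i (deriv (γ i) (x i)) p).det := by
  have hcurve : ∀ i, HasFDerivAt (fun x : ι → ℝ => a i (γ i (x i)))
      (a i ∘L .toSpanSingleton ℝ (deriv (γ i) (x i)) ∘L .proj i) x := fun i =>
    (a i).hasFDerivAt.comp x ((hγ i).hasDerivAt.hasFDerivAt.comp x (hasFDerivAt_apply i x))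
  have hsum : fderiv ℝ (fun x => curveSum γ (a, x)) x =
      (Matrix.toLin' (Matrix.of fun p i => a i (deriv (γ i) (x i)) p)).toContinuousLinearMap := by
    refine (HasFDerivAt.fun_sum fun i _ => hcurve i).fderiv.trans ?_
    ext v p
    simp [Matrix.mulVec, dotProduct, mul_comm]
  rw [hsum, LinearMap.det_toContinuousLinearMap, LinearMap.det_toLin']

theorem stmt9_general [DecidableEq ι] {m : ℕ} {γ : ι → ℝ → F} {S : ι → Set ℝ}
    (hγ : ∀ i, ContDiffOn ℝ (m + 1 : ℕ) (γ i) (S i)) {I : Set (ι → ℝ)}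
    (hIS : ∀ x ∈ I, ∀ i, x i ∈ S i) (hI : volume I ≠ ∞) (hI0 : volume (frontier I) = 0)
    {Ω : Set (ι → F →L[ℝ] (ι → ℝ))} (hΩ : IsCompact Ω)
    (hinj : ∀ a ∈ Ω, I.InjOn fun x => curveSum γ (a, x))
    (hdet : ∀ a ∈ Ω, ∀ x ∈ I,
      (Matrix.of fun p i => a i (derivWithin (γ i) (S i) (x i)) p).det ≠ 0)
    {ε : ℝ≥0∞} (hε : ε ≠ 0) :
    ∃ C, ∀ a ∈ Ω, HasSmoothPart volume m C ε
      ((volume.restrict I).map fun x => curveSum γ (a, x)) := by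
  have hS : ∀ x ∈ interior I, ∀ i, S i ∈ 𝓝 (x i) := fun x hx i =>
    Filter.mem_of_superset ((isOpenMap_eval i).image_mem_nhds (mem_interior_iff_mem_nhds.1 hx))
      (Set.image_subset_iff.2 fun y hy => hIS y hy i)
  have hγ' : ∀ x ∈ interior I, ∀ i, ContDiffAt ℝ (m + 1 : ℕ) (γ i) (x i) := fun x hx i =>
    (hγ i).contDiffAt (hS x hx i)
  rw [← Measure.restrict_congr_set (interior_ae_eq_of_null_frontier hI0)]
  refine exists_forall_hasSmoothPart_map_restrict volume hΩ isOpen_interior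
    (measure_ne_top_of_subset interior_subset hI)
    (fun a _ x hx => contDiffAt_curveSum (hγ' x hx))
    (fun a ha => (hinj a ha).mono interior_subset) (fun a ha x hx => ?_) hε
  rw [det_fderiv_curveSum fun i =>
    (hγ' x hx i).differentiableAt (by exact_mod_cast m.succ_ne_zero)]
  simpa only [derivWithin_of_mem_nhds (hS x hx _)] using hdet a ha x (interior_subset hx)

end CurveSum

/-- Decomposition of `(Ψ_a)_*(λ|_I)` into a part with a `C^m` density
with uniformly bounded `C^m` norm, plus an error part of mass less than `ε`, uniformly
over a compact set `Ω_A ⊆ A_k^k` on which `Ψ_a` is injective on `I` and `F_ψ ≠ 0` on `I`. -/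
theorem stmt9 (k m : ℕ) (ψ : ℝ → (Fin k → ℝ)) (hψ : TotallyNonPlanar k ψ)
    (hsmooth : ContDiffOn ℝ (m + 1 : ℕ) ψ (Set.Icc 0 1))
    (ΩA : Set (Fin k → Ak k)) (hΩA : IsCompact ΩA)
    (c d : Fin k → ℝ) (hcd : ∀ i, 0 ≤ c i ∧ c i ≤ d i ∧ d i ≤ 1)
    (hinj : ∀ a ∈ ΩA, Set.InjOn (PsiMap k ψ a) {x | ∀ i, x i ∈ Set.Icc (c i) (d i)})
    (hF : ∀ a ∈ ΩA, ∀ x ∈ {x : Fin k → ℝ | ∀ i, x i ∈ Set.Icc (c i) (d i)},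
      Fpsi k ψ a x ≠ 0)
    (ε : ℝ) (hε : 0 < ε) :
    ∃ C : ℝ, ∀ a ∈ ΩA, ∃ τ₁ τ₂ : Measure (Fin k → ℝ),
      Measure.map (PsiMap k ψ a)
          (volume.restrict {x : Fin k → ℝ | ∀ i, x i ∈ Set.Icc (c i) (d i)}) = τ₁ + τ₂ ∧
      (∃ g : (Fin k → ℝ) → ℝ, ContDiff ℝ (m : ℕ) g ∧ (∀ x, 0 ≤ g x) ∧
        τ₁ = volume.withDensity (fun x => ENNReal.ofReal (g x)) ∧
        ∀ i ≤ m, ∀ x, ‖iteratedFDeriv ℝ i g x‖ < C) ∧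
      τ₂ Set.univ < ENNReal.ofReal ε :=
  (stmt9_general (γ := fun _ => ψ) (I := {x | ∀ i, x i ∈ Set.Icc (c i) (d i)}) (fun _ => hsmooth)
    (fun _ hx i => Set.Icc_subset_Icc (hcd i).1 (hcd i).2.2 (hx i))
    (volume_setOf_forall_mem_Icc_ne_top c d) (volume_frontier_setOf_forall_mem_Icc c d)
    (hΩA.image continuous_diagonalOperators) (Set.forall_mem_image.2 hinj)
    (Set.forall_mem_image.2 hF) (ENNReal.ofReal_pos.2 hε).ne').imp
    fun _ hC _ ha => hC _ ⟨_, ha, rfl⟩
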